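/- arXiv:1605.01790 — 9 statements merged into one kernel-verified Lean document; each statement's English description precedes it below -/
import Mathlib

section
/- Let S ∈ ℂ^{pq×pq}, and let A ∈ ℂ^{p×p} with A ≠ 0. Define R_B := (Σ_{i,j=1}^p conj(a_{ij}) S(i,j)) / ‖A‖_F² ∈ ℂ^{q×q}. Then for every B ∈ ℂ^{q×q}: ‖S − A⊗B‖_F² = ‖A‖_F² ‖B − R_B‖_F² + ‖S‖_F² − ‖A‖_F² ‖R_B‖_F². -/
open Matrix Kronecker BigOperators

/-- Squared Frobenius norm of a complex matrix. -/
noncomputable def frobSq {m n : Type*} [Fintype m] [Fintype n] (M : Matrix m n ℂ) : ℝ :=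
  ∑ i, ∑ j, Complex.normSq (M i j)

/-- The (i,j)-th q×q block of a pq×pq matrix. -/
def blk {p q : ℕ} (S : Matrix (Fin p × Fin q) (Fin p × Fin q) ℂ) (i j : Fin p) :
    Matrix (Fin q) (Fin q) ℂ := Matrix.of fun k l => S (i, k) (j, l)

theorem frobSq_prod_aux {p q : ℕ} (M : Matrix (Fin p × Fin q) (Fin p × Fin q) ℂ) :
    frobSq M = ∑ k, ∑ l, ∑ i, ∑ j, Complex.normSq (M (i, k) (j, l)) := by
  unfold frobSq
  rw [Fintype.sum_prod_type_right]
  refine Finset.sum_congr rfl fun k _ => ?_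
  simp only [Fintype.sum_prod_type_right]
  rw [Finset.sum_comm]

theorem entry_aux {p : ℕ} (A s : Matrix (Fin p) (Fin p) ℂ) (b r : ℂ)
    (h : (frobSq A : ℂ) * r = ∑ i, ∑ j, (starRingEnd ℂ) (A i j) * s i j) :
    ∑ i, ∑ j, Complex.normSq (s i j - A i j * b) =
      frobSq A * Complex.normSq (b - r) + ∑ i, ∑ j, Complex.normSq (s i j)
        - frobSq A * Complex.normSq r := by
  have e : ∀ i j, Complex.normSq (s i j - A i j * b) = Complex.normSq (s i j)
      + Complex.normSq (A i j) * Complex.normSq b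
      - 2 * (((starRingEnd ℂ) (A i j) * s i j) * (starRingEnd ℂ) b).re := by
    intro i j
    rw [Complex.normSq_sub, Complex.normSq_mul, map_mul]
    congr 3
    ring
  have h2 : ∑ i, ∑ j, (((starRingEnd ℂ) (A i j) * s i j) * (starRingEnd ℂ) b).re
      = frobSq A * (b * (starRingEnd ℂ) r).re := by
    have : ∑ i, ∑ j, (((starRingEnd ℂ) (A i j) * s i j) * (starRingEnd ℂ) b).re
        = (((frobSq A : ℂ) * r) * (starRingEnd ℂ) b).re := by
      rw [h]
      simp only [Finset.sum_mul, Complex.re_sum]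
    rw [this, mul_assoc, Complex.re_ofReal_mul]
    simp only [Complex.mul_re, Complex.conj_re, Complex.conj_im]
    ring
  simp only [e, Finset.sum_sub_distrib, Finset.sum_add_distrib, ← Finset.sum_mul,
    ← Finset.mul_sum, h2]
  rw [Complex.normSq_sub]
  change _ + frobSq A * _ - _ = _
  ring

/-- For fixed nonzero A, with R_B = (Σᵢⱼ conj(aᵢⱼ) S(i,j)) / ‖A‖_F², the objective decomposes as
‖S − A⊗B‖_F² = ‖A‖_F² ‖B − R_B‖_F² + ‖S‖_F² − ‖A‖_F² ‖R_B‖_F² for every B. -/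
theorem frobSq_sub_kronecker_eq_of_RB {p q : ℕ}
    (S : Matrix (Fin p × Fin q) (Fin p × Fin q) ℂ)
    (A : Matrix (Fin p) (Fin p) ℂ) (hA : A ≠ 0)
    (RB : Matrix (Fin q) (Fin q) ℂ)
    (hRB : RB = ((frobSq A : ℂ))⁻¹ • ∑ i, ∑ j, (starRingEnd ℂ) (A i j) • blk S i j)
    (B : Matrix (Fin q) (Fin q) ℂ) :
    frobSq (S - A ⊗ₖ B) =
      frobSq A * frobSq (B - RB) + frobSq S - frobSq A * frobSq RB := by
  have hN : (frobSq A : ℂ) ≠ 0 := by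
    intro h0
    apply hA
    have h1 : frobSq A = 0 := by exact_mod_cast h0
    unfold frobSq at h1
    have h3 := (Finset.sum_eq_zero_iff_of_nonneg
      (fun i _ => Finset.sum_nonneg fun j _ => Complex.normSq_nonneg (A i j))).mp h1
    ext i j
    have h2 := (Finset.sum_eq_zero_iff_of_nonneg
      (fun j _ => Complex.normSq_nonneg (A i j))).mp (h3 i (Finset.mem_univ i))
    exact Complex.normSq_eq_zero.mp (h2 j (Finset.mem_univ j))
  have key : ∀ k l, (frobSq A : ℂ) * RB k l
      = ∑ i, ∑ j, (starRingEnd ℂ) (A i j) * (Matrix.of fun i j => S (i, k) (j, l)) i j := by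
    intro k l
    rw [hRB]
    simp only [Matrix.smul_apply, Matrix.sum_apply, smul_eq_mul, blk, Matrix.of_apply]
    rw [mul_inv_cancel_left₀ hN]
  have e := fun k l => entry_aux A _ (B k l) (RB k l) (key k l)
  simp only [Matrix.of_apply] at e
  rw [frobSq_prod_aux, frobSq_prod_aux S]
  simp only [Matrix.sub_apply, Matrix.kroneckerMap_apply, e, Finset.sum_sub_distrib,
    Finset.sum_add_distrib, ← Finset.mul_sum]
  rfl
end

section
/- Let S ∈ ℂ^{pq×pq}, and let B ∈ ℂ^{q×q} with B ≠ 0. Define R_A ∈ ℂ^{p×p} entrywise by (R_A)_{ij} := tr(B^H S(i,j)) / ‖B‖_F². Then for every A ∈ ℂ^{p×p}: ‖S − A⊗B‖_F² = ‖B‖_F² ‖A − R_A‖_F² + ‖S‖_F² − ‖B‖_F² ‖R_A‖_F². -/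
open Matrix Kronecker BigOperators

theorem frobSq_blocks {p q : ℕ} (M : Matrix (Fin p × Fin q) (Fin p × Fin q) ℂ) :
    frobSq M = ∑ i, ∑ j, frobSq (blk M i j) := by
  simp only [frobSq, blk, Matrix.of_apply, Fintype.sum_prod_type]
  exact Finset.sum_congr rfl fun i _ => Finset.sum_comm

theorem frobSq_ne_zero {q : ℕ} (B : Matrix (Fin q) (Fin q) ℂ) (hB : B ≠ 0) : frobSq B ≠ 0 := by
  intro h
  apply hB
  ext i j
  have h1 := (Finset.sum_eq_zero_iff_of_nonneg
    (fun i _ => Finset.sum_nonneg fun j _ => Complex.normSq_nonneg (B i j))).1 h i (Finset.mem_univ i)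
  have h2 := (Finset.sum_eq_zero_iff_of_nonneg
    (fun j _ => Complex.normSq_nonneg (B i j))).1 h1 j (Finset.mem_univ j)
  simpa using h2

theorem frobSq_sub_smul {q : ℕ} (T B : Matrix (Fin q) (Fin q) ℂ) (a : ℂ) :
    frobSq (T - a • B) = frobSq T + Complex.normSq a * frobSq B
      - 2 * ((starRingEnd ℂ) a * (Bᴴ * T).trace).re := by
  have ht : (Bᴴ * T).trace = ∑ k, ∑ l, (starRingEnd ℂ) (B k l) * T k l := by
    simp only [Matrix.trace, Matrix.diag, Matrix.mul_apply, Matrix.conjTranspose_apply]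
    exact Finset.sum_comm
  rw [ht]
  simp only [frobSq, Finset.mul_sum, Complex.re_sum, ← Finset.sum_add_distrib,
    ← Finset.sum_sub_distrib]
  refine Finset.sum_congr rfl fun k _ => Finset.sum_congr rfl fun l _ => ?_
  simp [Complex.normSq_apply]
  ring

/-- For fixed nonzero B, with (R_A)ᵢⱼ = tr(Bᴴ S(i,j)) / ‖B‖_F², the objective decomposes as
‖S − A⊗B‖_F² = ‖B‖_F² ‖A − R_A‖_F² + ‖S‖_F² − ‖B‖_F² ‖R_A‖_F² for every A. -/
theorem frobSq_sub_kronecker_eq_of_RA {p q : ℕ}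
    (S : Matrix (Fin p × Fin q) (Fin p × Fin q) ℂ)
    (B : Matrix (Fin q) (Fin q) ℂ) (hB : B ≠ 0)
    (RA : Matrix (Fin p) (Fin p) ℂ)
    (hRA : RA = Matrix.of fun i j => (Bᴴ * blk S i j).trace / (frobSq B : ℂ))
    (A : Matrix (Fin p) (Fin p) ℂ) :
    frobSq (S - A ⊗ₖ B) =
      frobSq B * frobSq (A - RA) + frobSq S - frobSq B * frobSq RA := by
  have hb := frobSq_ne_zero B hB
  have hb' : (frobSq B : ℂ) ≠ 0 := by exact_mod_cast hb
  have hk : ∀ i j, blk (S - A ⊗ₖ B) i j = blk S i j - A i j • B := by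
    intro i j
    ext k l
    simp [blk]
  have ht : ∀ i j, (Bᴴ * blk S i j).trace = (frobSq B : ℂ) * RA i j := by
    intro i j
    rw [hRA, Matrix.of_apply]
    field_simp
  rw [frobSq_blocks, frobSq_blocks S]
  simp only [hk, frobSq_sub_smul, ht]
  rw [show frobSq (A - RA) = ∑ i, ∑ j, Complex.normSq ((A - RA) i j) from rfl,
    show frobSq RA = ∑ i, ∑ j, Complex.normSq (RA i j) from rfl]
  simp only [Finset.mul_sum, ← Finset.sum_add_distrib, ← Finset.sum_sub_distrib]
  refine Finset.sum_congr rfl fun i _ => Finset.sum_congr rfl fun j _ => ?_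
  simp [Complex.normSq_apply]
  ring
end

section
/- Let S ∈ ℂ^{pq×pq} be Hermitian positive semidefinite, and let A ∈ ℂ^{p×p} be Hermitian positive semidefinite. Then the matrix Σ_{i,j=1}^p conj(a_{ij}) S(i,j) ∈ ℂ^{q×q} is Hermitian positive semidefinite. -/
open Matrix Kronecker BigOperators ComplexOrder

/-- If S and A are Hermitian positive semidefinite, then Σᵢⱼ conj(aᵢⱼ) S(i,j) is
Hermitian positive semidefinite. -/
theorem posSemidef_sum_conj_smul_blocks {p q : ℕ}
    (S : Matrix (Fin p × Fin q) (Fin p × Fin q) ℂ) (hS : S.PosSemidef)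
    (A : Matrix (Fin p) (Fin p) ℂ) (hA : A.PosSemidef) :
    (∑ i, ∑ j, (starRingEnd ℂ) (A i j) • blk S i j).PosSemidef := by
  have hT : ((Aᵀ.submatrix Prod.fst Prod.fst) ⊙ S).PosSemidef :=
    (hA.transpose.submatrix (Prod.fst : Fin p × Fin q → Fin p)).hadamard hS
  have h := hT.conjTranspose_mul_mul_same
    (Matrix.of fun (x : Fin p × Fin q) (l : Fin q) => if x.2 = l then (1 : ℂ) else 0)
  convert h using 1
  ext k l
  have hc : ∀ i j, (starRingEnd ℂ) (A i j) = A j i := fun i j => hA.isHermitian.apply j i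
  simp only [Matrix.sum_apply, Matrix.smul_apply, blk, Matrix.of_apply, smul_eq_mul, hc,
    Matrix.mul_apply, Fintype.sum_prod_type, Matrix.conjTranspose_apply, Matrix.hadamard_apply,
    Matrix.submatrix_apply, Matrix.transpose_apply, apply_ite star, star_one, star_zero,
    ite_mul, one_mul, zero_mul, mul_ite, mul_one, mul_zero, Finset.sum_ite_eq',
    Finset.mem_univ, if_true]
  exact Finset.sum_comm
end

section
/- Let S ∈ ℂ^{pq×pq} be Hermitian positive semidefinite, and let B ∈ ℂ^{q×q} be Hermitian positive semidefinite. Then the matrix R_A ∈ ℂ^{p×p} with entries (R_A)_{ij} = tr(B^H S(i,j)) is Hermitian positive semidefinite. -/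
open Matrix Kronecker BigOperators ComplexOrder

/-- If S and B are Hermitian positive semidefinite, then the matrix R_A with entries
(R_A)ᵢⱼ = tr(Bᴴ S(i,j)) is Hermitian positive semidefinite. -/
theorem posSemidef_traceMatrix {p q : ℕ}
    (S : Matrix (Fin p × Fin q) (Fin p × Fin q) ℂ) (hS : S.PosSemidef)
    (B : Matrix (Fin q) (Fin q) ℂ) (hB : B.PosSemidef) :
    (Matrix.of fun i j => (Bᴴ * blk S i j).trace : Matrix (Fin p) (Fin p) ℂ).PosSemidef := by
  rw [hB.isHermitian.eq]
  obtain ⟨m, v, rfl⟩ := Matrix.posSemidef_iff_eq_sum_vecMulVec.mp hB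
  have key : (Matrix.of fun i j =>
      ((∑ t, vecMulVec (v t) (star (v t))) * blk S i j).trace : Matrix (Fin p) (Fin p) ℂ) =
      ∑ t, (Matrix.of fun (a : Fin p × Fin q) (j : Fin p) =>
          if a.1 = j then v t a.2 else 0)ᴴ * S *
        (Matrix.of fun (a : Fin p × Fin q) (j : Fin p) => if a.1 = j then v t a.2 else 0) := by
    ext i j
    simp only [Matrix.of_apply, Finset.sum_mul, Matrix.trace_sum, Matrix.sum_apply]
    refine Finset.sum_congr rfl fun t _ => ?_
    simp only [Matrix.trace, Matrix.diag_apply, Matrix.mul_apply, vecMulVec_apply, blk,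
      Matrix.of_apply, Matrix.conjTranspose_apply, Fintype.sum_prod_type, Pi.star_apply,
      apply_ite star, star_zero, ite_mul, zero_mul, mul_ite, mul_zero]
    rw [Finset.sum_eq_single j (by intro b _ hb; simp [hb]) (by simp)]
    refine Finset.sum_congr rfl fun k _ => ?_
    rw [if_pos rfl, Finset.sum_eq_single i (by intro b _ hb; simp [hb]) (by simp),
      Finset.sum_mul]
    refine Finset.sum_congr rfl fun l _ => ?_
    rw [if_pos rfl]
    ring
  rw [key]
  exact posSemidef_sum _ fun t _ => hS.conjTranspose_mul_mul_same _
end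

section
/- Let S ∈ ℂ^{pq×pq} be Hermitian positive semidefinite, let A ∈ ℂ^{p×p} be Hermitian positive semidefinite with A ≠ 0, and let 1 ≤ r_b ≤ q. Define R_B := (Σ_{i,j=1}^p conj(a_{ij}) S(i,j)) / ‖A‖_F² (which is Hermitian positive semidefinite) and B̂ := EIG_{r_b}(R_B). Then for every B ∈ ℂ^{q×q} with rank(B) ≤ r_b: ‖S − A⊗B̂‖_F ≤ ‖S − A⊗B‖_F. -/
open Matrix Kronecker BigOperators ComplexOrder

lemma ey_scalar {ι : Type*} (s : Finset ι) (a x : ι → ℂ) (b ρ : ℂ) (α : ℝ)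
    (hα : α = ∑ i ∈ s, Complex.normSq (a i)) (hρ : (α : ℂ) * ρ = ∑ i ∈ s, starRingEnd ℂ (a i) * x i) :
    ∑ i ∈ s, Complex.normSq (x i - a i * b) =
      ∑ i ∈ s, Complex.normSq (x i) - α * Complex.normSq ρ + α * Complex.normSq (ρ - b) := by
  have h1 : ∀ i, Complex.normSq (x i - a i * b) =
      Complex.normSq (x i) + Complex.normSq (a i) * Complex.normSq b
        - 2 * ((starRingEnd ℂ (a i) * x i) * starRingEnd ℂ b).re := by
    intro i
    simp [Complex.normSq_apply]
    ring
  simp_rw [h1]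
  rw [Finset.sum_sub_distrib, Finset.sum_add_distrib, ← Finset.sum_mul, ← hα, ← Finset.mul_sum,
    ← Complex.re_sum, ← Finset.sum_mul, ← hρ]
  simp [Complex.normSq_apply]
  ring

lemma ey_expand {p q : ℕ} (S : Matrix (Fin p × Fin q) (Fin p × Fin q) ℂ)
    (A : Matrix (Fin p) (Fin p) ℂ) (hA0 : frobSq A ≠ 0)
    (RB : Matrix (Fin q) (Fin q) ℂ)
    (hRB : RB = ((frobSq A : ℂ))⁻¹ • ∑ i, ∑ j, (starRingEnd ℂ) (A i j) • blk S i j)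
    (B : Matrix (Fin q) (Fin q) ℂ) :
    frobSq (S - A ⊗ₖ B) = frobSq S - frobSq A * frobSq RB + frobSq A * frobSq (RB - B) := by
  have key : ∀ k l, ∑ ij : Fin p × Fin p,
      Complex.normSq (S (ij.1, k) (ij.2, l) - A ij.1 ij.2 * B k l) =
      ∑ ij : Fin p × Fin p, Complex.normSq (S (ij.1, k) (ij.2, l))
        - frobSq A * Complex.normSq (RB k l) + frobSq A * Complex.normSq (RB k l - B k l) := by
    intro k l
    apply ey_scalar Finset.univ (fun ij : Fin p × Fin p => A ij.1 ij.2)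
      (fun ij : Fin p × Fin p => S (ij.1, k) (ij.2, l))
    · rw [Fintype.sum_prod_type]; rfl
    · have : (frobSq A : ℂ) ≠ 0 := by exact_mod_cast hA0
      rw [hRB, Fintype.sum_prod_type]
      simp [Matrix.sum_apply, blk, this]
  have re : ∀ M : Matrix (Fin p × Fin q) (Fin p × Fin q) ℂ, frobSq M =
      ∑ k, ∑ l, ∑ ij : Fin p × Fin p, Complex.normSq (M (ij.1, k) (ij.2, l)) := by
    intro M
    simp only [frobSq, Fintype.sum_prod_type]
    rw [Finset.sum_comm]
    refine Finset.sum_congr rfl fun k _ => ?_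
    rw [Finset.sum_comm]
    conv_rhs => rw [Finset.sum_comm]
    rw [Finset.sum_comm]
    refine Finset.sum_congr rfl fun k _ => ?_
    rw [Finset.sum_comm]
  rw [re, re]
  simp only [Matrix.sub_apply, Matrix.kroneckerMap_apply]
  simp_rw [key]
  simp only [Finset.sum_add_distrib, Finset.sum_sub_distrib, ← Finset.mul_sum]
  rfl

lemma ey_weights {q : ℕ} (rb : ℕ) (hrbq : rb ≤ q) (mu w : Fin q → ℝ) (hanti : Antitone mu)
    (hmu : ∀ i, 0 ≤ mu i) (hw0 : ∀ i, 0 ≤ w i) (hw1 : ∀ i, w i ≤ 1) (hw : ∑ i, w i ≤ rb) :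
    ∑ i : Fin q, (if (i : ℕ) < rb then 0 else mu i) ≤ ∑ i, mu i * (1 - w i) := by
  rcases Nat.eq_zero_or_pos rb with h0 | hpos
  · subst h0
    have hz : ∀ i, w i = 0 := by
      have h : ∑ i, w i = 0 := le_antisymm (by simpa using hw) (Finset.sum_nonneg fun i _ => hw0 i)
      intro i
      exact (Finset.sum_eq_zero_iff_of_nonneg fun i _ => hw0 i).1 h i (Finset.mem_univ i)
    simp [hz]
  · let t : Fin q := ⟨rb - 1, by omega⟩
    have hcard : ∑ i : Fin q, (if (i : ℕ) < rb then (1 : ℝ) else 0) = rb := by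
      have := Fin.sum_univ_eq_sum_range (fun i => if i < rb then (1 : ℝ) else 0) q
      rw [this, ← Finset.sum_filter]
      have : (Finset.range q).filter (fun i => i < rb) = Finset.range rb := by
        ext i; simp; omega
      rw [this]; simp
    have hpt : ∀ i : Fin q, (if (i : ℕ) < rb then 0 else mu i) ≤
        mu i * (1 - w i) + mu t * (w i - (if (i : ℕ) < rb then (1 : ℝ) else 0)) := by
      intro i
      split_ifs with h
      · have : mu t ≤ mu i := hanti (by rw [Fin.le_def]; simp [t]; omega)
        nlinarith [hw1 i]
      · have : mu i ≤ mu t := hanti (by rw [Fin.le_def]; simp [t]; omega)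
        nlinarith [hw0 i]
    have := Finset.sum_le_sum fun i (_ : i ∈ Finset.univ) => hpt i
    rw [Finset.sum_add_distrib, ← Finset.mul_sum, Finset.sum_sub_distrib, hcard] at this
    nlinarith [hmu t]

lemma ey_proj {E : Type*} [NormedAddCommGroup E] [InnerProductSpace ℂ E] [FiniteDimensional ℂ E]
    {q : ℕ} (rb : ℕ) (hrbq : rb ≤ q) (e : OrthonormalBasis (Fin q) ℂ E) (K : Submodule ℂ E)
    (hK : Module.finrank ℂ K ≤ rb) (c : Fin q → E) (hc : ∀ j, c j ∈ K) (lam : Fin q → ℝ)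
    (hanti : Antitone lam) (hnonneg : ∀ i, 0 ≤ lam i) :
    ∑ i : Fin q, (if (i : ℕ) < rb then 0 else lam i ^ 2) ≤
      ∑ j, ‖(lam j : ℂ) • e j - c j‖ ^ 2 := by
  have hpyth : ∀ x : E, ‖x‖ ^ 2 = ‖K.starProjection x‖ ^ 2 + ‖Kᗮ.starProjection x‖ ^ 2 :=
    fun x => K.norm_sq_eq_add_norm_sq_starProjection x
  have hw : ∑ j, ‖K.starProjection (e j)‖ ^ 2 ≤ (rb : ℝ) := by
    let b := stdOrthonormalBasis ℂ K
    have h1 : ∀ j, ‖K.starProjection (e j)‖ ^ 2 = ∑ k, ‖inner ℂ (b k : E) (e j)‖ ^ 2 := by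
      intro j
      have := b.sum_sq_norm_inner_right (K.orthogonalProjectionOnto (e j))
      rw [Submodule.starProjection_apply, Submodule.norm_coe, ← this]
      refine Finset.sum_congr rfl fun k _ => ?_
      rw [Submodule.inner_orthogonalProjectionOnto_eq_of_mem_left]
    simp_rw [h1]
    rw [Finset.sum_comm]
    have h2 : ∀ k, ∑ j, ‖inner ℂ (b k : E) (e j)‖ ^ 2 = 1 := by
      intro k
      rw [e.sum_sq_norm_inner_left, Submodule.norm_coe, b.orthonormal.1 k]; simp
    simp_rw [h2]
    simpa using hK
  refine (ey_weights rb hrbq (fun i => lam i ^ 2) (fun j => ‖K.starProjection (e j)‖ ^ 2)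
    ?_ (fun i => sq_nonneg _) (fun i => sq_nonneg _) ?_ hw).trans ?_
  · intro i j h
    exact pow_le_pow_left₀ (hnonneg j) (hanti h) 2
  · intro j
    have := hpyth (e j)
    rw [e.orthonormal.1 j] at this
    nlinarith [sq_nonneg ‖Kᗮ.starProjection (e j)‖]
  · refine Finset.sum_le_sum fun j _ => ?_
    have h1 := hpyth (e j)
    rw [e.orthonormal.1 j] at h1
    have h2 := hpyth ((lam j : ℂ) • e j - c j)
    have h3 : Kᗮ.starProjection (c j) = 0 := by
      rw [Submodule.starProjection_apply_eq_zero_iff]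
      simpa using hc j
    rw [map_sub Kᗮ.starProjection, map_smul Kᗮ.starProjection, h3, sub_zero, norm_smul, mul_pow] at h2
    have h4 : ‖(lam j : ℂ)‖ ^ 2 = lam j ^ 2 := by simp
    rw [h4] at h2
    have h5 : 1 - ‖K.starProjection (e j)‖ ^ 2 = ‖Kᗮ.starProjection (e j)‖ ^ 2 := by linarith
    simp only [h5]
    rw [h2]
    nlinarith [sq_nonneg ‖K.starProjection ((lam j : ℂ) • e j - c j)‖]

lemma ey_frob {q : ℕ} (e : OrthonormalBasis (Fin q) ℂ (EuclideanSpace ℂ (Fin q)))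
    (M : Matrix (Fin q) (Fin q) ℂ) :
    frobSq M = ∑ j, ‖(Matrix.toEuclideanLin M) (e j)‖ ^ 2 := by
  simp_rw [EuclideanSpace.norm_sq_eq]
  rw [Finset.sum_comm]
  unfold frobSq
  refine Finset.sum_congr rfl fun i _ => ?_
  have := e.sum_sq_norm_inner_left (WithLp.toLp 2 (star (M i)))
  rw [EuclideanSpace.norm_sq_eq] at this
  simp only [Complex.normSq_eq_norm_sq]
  simp only [Pi.star_apply, norm_star] at this
  rw [← this]
  refine Finset.sum_congr rfl fun j _ => ?_
  congr 2
  simp [PiLp.inner_apply, Matrix.toEuclideanLin_apply, Matrix.mulVec, dotProduct, mul_comm]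

lemma ey_main {q : ℕ} (rb : ℕ) (hrbq : rb ≤ q)
    (RB : Matrix (Fin q) (Fin q) ℂ)
    (lam : Fin q → ℝ) (u : Fin q → Fin q → ℂ)
    (hanti : Antitone lam) (hnonneg : ∀ i, 0 ≤ lam i)
    (horth : ∀ i j, star (u i) ⬝ᵥ u j = if i = j then 1 else 0)
    (hdec : RB = ∑ i, (lam i : ℂ) • Matrix.vecMulVec (u i) (star (u i)))
    (Bhat : Matrix (Fin q) (Fin q) ℂ)
    (hBhat : Bhat = ∑ i ∈ Finset.univ.filter (fun i : Fin q => (i : ℕ) < rb),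
      (lam i : ℂ) • Matrix.vecMulVec (u i) (star (u i)))
    (B : Matrix (Fin q) (Fin q) ℂ) (hB : B.rank ≤ rb) :
    frobSq (RB - Bhat) ≤ frobSq (RB - B) := by
  have hon : Orthonormal ℂ (fun i => (WithLp.toLp 2 (u i) : EuclideanSpace ℂ (Fin q))) := by
    rw [orthonormal_iff_ite]
    intro i j
    rw [← horth i j, EuclideanSpace.inner_eq_star_dotProduct, dotProduct_comm]
  let e : OrthonormalBasis (Fin q) ℂ (EuclideanSpace ℂ (Fin q)) :=
    OrthonormalBasis.mk hon
      (hon.linearIndependent.span_eq_top_of_card_eq_finrank' (by simp)).ge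
  have he : ∀ i, e i = WithLp.toLp 2 (u i) := by intro i; simp [e]
  have hv : ∀ (f : Fin q → ℂ) j,
      (∑ i, f i • Matrix.vecMulVec (u i) (star (u i))) *ᵥ u j = f j • u j := by
    intro f j
    rw [Matrix.sum_mulVec]
    simp [Matrix.smul_mulVec, Matrix.vecMulVec_mulVec, horth]
  have hR : ∀ j, RB *ᵥ u j = (lam j : ℂ) • u j := by
    intro j; rw [hdec]; exact hv (fun i => (lam i : ℂ)) j
  have hBh : ∀ j, Bhat *ᵥ u j = (if (j : ℕ) < rb then (lam j : ℂ) else 0) • u j := by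
    intro j; rw [hBhat, Finset.sum_filter, ← hv (fun j => if (j : ℕ) < rb then (lam j : ℂ) else 0)]
    congr 1
    refine Finset.sum_congr rfl fun i _ => ?_
    split_ifs <;> simp
  have h1 : frobSq (RB - Bhat) = ∑ i : Fin q, (if (i : ℕ) < rb then 0 else lam i ^ 2) := by
    rw [ey_frob e]
    refine Finset.sum_congr rfl fun j _ => ?_
    have : Matrix.toEuclideanLin (RB - Bhat) (e j) =
        ((lam j : ℂ) - (if (j : ℕ) < rb then (lam j : ℂ) else 0)) • e j := by
      rw [he, Matrix.toEuclideanLin_apply]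
      simp only [Matrix.sub_mulVec, hR, hBh, ← sub_smul]
      rfl
    rw [this, norm_smul, e.orthonormal.1 j]
    split_ifs <;> simp
  rw [h1, ey_frob e (RB - B)]
  refine (ey_proj rb hrbq e (LinearMap.range (Matrix.toEuclideanLin B)) ?_
    (fun j => Matrix.toEuclideanLin B (e j)) (fun j => ⟨_, rfl⟩) lam hanti hnonneg).trans ?_
  · rw [Matrix.rank_eq_finrank_range_toLin B (EuclideanSpace.basisFun (Fin q) ℂ).toBasis
      (EuclideanSpace.basisFun (Fin q) ℂ).toBasis] at hB
    rw [Matrix.toEuclideanLin_eq_toLin_orthonormal]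
    exact hB
  · refine le_of_eq (Finset.sum_congr rfl fun j _ => ?_)
    rw [map_sub, LinearMap.sub_apply]
    congr 3
    rw [he, Matrix.toEuclideanLin_apply]
    simp only [hR]
    rfl

/-- B-step optimality of LR-Kron: for S, A Hermitian PSD with A ≠ 0, the rank-r_b
eigentruncation B̂ = EIG_{r_b}(R_B) of R_B = (Σᵢⱼ conj(aᵢⱼ)S(i,j))/‖A‖_F² minimizes
‖S − A⊗B‖_F over all B of rank at most r_b. -/
theorem eig_truncation_RB_minimizes {p q : ℕ}
    (S : Matrix (Fin p × Fin q) (Fin p × Fin q) ℂ) (hS : S.PosSemidef)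
    (A : Matrix (Fin p) (Fin p) ℂ) (hA : A.PosSemidef) (hA0 : A ≠ 0)
    (rb : ℕ) (hrb1 : 1 ≤ rb) (hrbq : rb ≤ q)
    (RB : Matrix (Fin q) (Fin q) ℂ)
    (hRB : RB = ((frobSq A : ℂ))⁻¹ • ∑ i, ∑ j, (starRingEnd ℂ) (A i j) • blk S i j)
    (hRBpsd : RB.PosSemidef)
    (lam : Fin q → ℝ) (u : Fin q → Fin q → ℂ)
    (hanti : Antitone lam) (hnonneg : ∀ i, 0 ≤ lam i)
    (horth : ∀ i j, star (u i) ⬝ᵥ u j = if i = j then 1 else 0)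
    (hdec : RB = ∑ i, (lam i : ℂ) • Matrix.vecMulVec (u i) (star (u i)))
    (Bhat : Matrix (Fin q) (Fin q) ℂ)
    (hBhat : Bhat = ∑ i ∈ Finset.univ.filter (fun i : Fin q => (i : ℕ) < rb),
      (lam i : ℂ) • Matrix.vecMulVec (u i) (star (u i))) :
    ∀ B : Matrix (Fin q) (Fin q) ℂ, B.rank ≤ rb →
      Real.sqrt (frobSq (S - A ⊗ₖ Bhat)) ≤ Real.sqrt (frobSq (S - A ⊗ₖ B)) := by
  intro B hB
  have hpos : ∀ M : Matrix (Fin p) (Fin p) ℂ, 0 ≤ frobSq M := fun M =>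
    Finset.sum_nonneg fun i _ => Finset.sum_nonneg fun j _ => Complex.normSq_nonneg _
  have hne : frobSq A ≠ 0 := by
    intro h
    apply hA0
    ext i j
    have h1 := (Finset.sum_eq_zero_iff_of_nonneg (fun i _ =>
      Finset.sum_nonneg fun j _ => Complex.normSq_nonneg _)).1 h i (Finset.mem_univ i)
    have h2 := (Finset.sum_eq_zero_iff_of_nonneg (fun j _ =>
      Complex.normSq_nonneg _)).1 h1 j (Finset.mem_univ j)
    simpa using h2
  apply Real.sqrt_le_sqrt
  rw [ey_expand S A hne RB hRB, ey_expand S A hne RB hRB]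
  have := ey_main rb hrbq RB lam u hanti hnonneg horth hdec Bhat hBhat B hB
  have := mul_le_mul_of_nonneg_left this (hpos A)
  linarith
end

section
/- Let S ∈ ℂ^{pq×pq} be Hermitian positive semidefinite, let B ∈ ℂ^{q×q} be Hermitian positive semidefinite with B ≠ 0, and let 1 ≤ r_a ≤ p. Define R_A ∈ ℂ^{p×p} entrywise by (R_A)_{ij} := tr(B^H S(i,j)) / ‖B‖_F² (which is Hermitian positive semidefinite) and Â := EIG_{r_a}(R_A). Then for every A ∈ ℂ^{p×p} with rank(A) ≤ r_a: ‖S − Â⊗B‖_F ≤ ‖S − A⊗B‖_F. -/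
open Matrix Kronecker BigOperators ComplexOrder

lemma ey_aux_sum {p r : ℕ} (hr1 : 1 ≤ r) (hrp : r ≤ p) (lam : Fin p → ℝ) (hanti : Antitone lam)
    (hnn : ∀ i, 0 ≤ lam i) (t : Fin p → ℝ) (h0 : ∀ i, 0 ≤ t i) (h1 : ∀ i, t i ≤ 1)
    (hs : ∑ i, t i ≤ r) :
    ∑ i : Fin p, (if (i : ℕ) < r then 0 else lam i ^ 2) ≤ ∑ i, lam i ^ 2 * (1 - t i) := by
  set m : Fin p := ⟨r - 1, by omega⟩ with hm
  have key : ∀ i : Fin p, lam m ^ 2 * ((if (i : ℕ) < r then 1 else 0) - t i) ≤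
      lam i ^ 2 * (1 - t i) - (if (i : ℕ) < r then 0 else lam i ^ 2) := by
    intro i
    split_ifs with h
    · have : lam m ≤ lam i := hanti (by rw [Fin.le_def]; simp [hm]; omega)
      have h2 : lam m ^ 2 ≤ lam i ^ 2 := pow_le_pow_left₀ (hnn _) this 2
      nlinarith [h1 i]
    · have : lam i ≤ lam m := hanti (by rw [Fin.le_def]; simp [hm]; omega)
      have h2 : lam i ^ 2 ≤ lam m ^ 2 := pow_le_pow_left₀ (hnn _) this 2
      nlinarith [h0 i]
  have hsum := Finset.sum_le_sum (fun i (_ : i ∈ Finset.univ) => key i)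
  rw [← Finset.mul_sum, Finset.sum_sub_distrib, Finset.sum_sub_distrib] at hsum
  have hc : ∑ i : Fin p, (if (i : ℕ) < r then (1 : ℝ) else 0) = r := by
    rw [Fin.sum_univ_eq_sum_range (fun i => if i < r then (1 : ℝ) else 0) p, ← Finset.sum_filter]
    have : (Finset.range p).filter (fun i => i < r) = Finset.range r := by
      ext x; simp; omega
    simp [this]
  rw [hc] at hsum
  have : 0 ≤ lam m ^ 2 * ((r : ℝ) - ∑ i, t i) := mul_nonneg (sq_nonneg _) (by linarith)
  linarith

lemma ey_abstract {p r : ℕ} {E : Type*} [NormedAddCommGroup E] [InnerProductSpace ℂ E]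
    [FiniteDimensional ℂ E]
    (hr1 : 1 ≤ r) (hrp : r ≤ p) (lam : Fin p → ℝ) (hanti : Antitone lam)
    (hnn : ∀ i, 0 ≤ lam i) (b : OrthonormalBasis (Fin p) ℂ E) (K : Submodule ℂ E)
    (hK : Module.finrank ℂ K ≤ r) (v : Fin p → E) (hv : ∀ i, v i ∈ K) :
    ∑ i : Fin p, (if (i : ℕ) < r then 0 else lam i ^ 2) ≤
      ∑ i, ‖(lam i : ℂ) • b i - v i‖ ^ 2 := by
  have hpy : ∀ x : E, ‖x‖ ^ 2 = ‖K.orthogonalProjectionOnto x‖ ^ 2 + ‖Kᗮ.orthogonalProjectionOnto x‖ ^ 2 :=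
    fun x => K.norm_sq_eq_add_norm_sq_projection x
  have hb : ∀ i, ‖b i‖ = 1 := fun i => b.orthonormal.1 i
  refine (ey_aux_sum hr1 hrp lam hanti hnn (fun i => ‖K.orthogonalProjectionOnto (b i)‖ ^ 2)
    (fun i => sq_nonneg _) ?_ ?_).trans ?_
  · intro i
    have := hpy (b i)
    rw [hb] at this
    nlinarith [sq_nonneg ‖Kᗮ.orthogonalProjectionOnto (b i)‖]
  · let w := stdOrthonormalBasis ℂ K
    have h1 : ∀ i, ‖K.orthogonalProjectionOnto (b i)‖ ^ 2 = ∑ k, ‖inner ℂ (w k : E) (b i)‖ ^ 2 := by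
      intro i
      rw [← w.sum_sq_norm_inner_right]
      refine Finset.sum_congr rfl fun k _ => ?_
      rw [Submodule.inner_orthogonalProjectionOnto_eq_of_mem_left]
    simp_rw [h1]
    rw [Finset.sum_comm]
    simp_rw [b.sum_sq_norm_inner_left]
    have h2 : ∀ k, ‖(w k : E)‖ = 1 := fun k => w.orthonormal.1 k
    simp [h2]
    exact_mod_cast hK
  · refine Finset.sum_le_sum fun i _ => ?_
    have h := hpy ((lam i : ℂ) • b i - v i)
    have h3 : Kᗮ.orthogonalProjectionOnto (v i) = 0 := by
      apply Submodule.orthogonalProjectionOnto_apply_of_mem_orthogonal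
      exact K.le_orthogonal_orthogonal (hv i)
    have h4 := hpy (b i)
    rw [hb] at h4
    have h5 : ‖Kᗮ.orthogonalProjectionOnto ((lam i : ℂ) • b i - v i)‖ ^ 2 =
        lam i ^ 2 * ‖Kᗮ.orthogonalProjectionOnto (b i)‖ ^ 2 := by
      rw [map_sub, h3, sub_zero, map_smul, norm_smul, mul_pow]
      simp
    rw [h, h5]
    nlinarith [sq_nonneg ‖K.orthogonalProjectionOnto ((lam i : ℂ) • b i - v i)‖]

lemma frobSq_kron_expand {p q : ℕ}
    (S : Matrix (Fin p × Fin q) (Fin p × Fin q) ℂ)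
    (B : Matrix (Fin q) (Fin q) ℂ) (hB0 : frobSq B ≠ 0)
    (RA : Matrix (Fin p) (Fin p) ℂ)
    (hRA : RA = Matrix.of fun i j => (Bᴴ * blk S i j).trace / (frobSq B : ℂ))
    (A : Matrix (Fin p) (Fin p) ℂ) :
    frobSq (S - A ⊗ₖ B) = frobSq S - frobSq B * frobSq RA + frobSq B * frobSq (RA - A) := by
  have key : ∀ i j, ∑ k, ∑ l, Complex.normSq (S (i, k) (j, l) - A i j * B k l) =
      ∑ k, ∑ l, Complex.normSq (S (i, k) (j, l)) - frobSq B * Complex.normSq (RA i j)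
        + frobSq B * Complex.normSq (RA i j - A i j) := by
    intro i j
    have hR : (frobSq B : ℂ) * RA i j = ∑ k, ∑ l, S (i, k) (j, l) * star (B k l) := by
      rw [hRA, Matrix.of_apply, mul_div_cancel₀ _ (by exact_mod_cast hB0)]
      simp only [Matrix.trace, Matrix.diag, Matrix.mul_apply, blk, Matrix.of_apply,
        Matrix.conjTranspose_apply]
      rw [Finset.sum_comm]
      simp_rw [mul_comm]
    have e1 : ∑ k, ∑ l, Complex.normSq (S (i, k) (j, l) - A i j * B k l) =
      ∑ k, ∑ l, Complex.normSq (S (i, k) (j, l)) + Complex.normSq (A i j) * frobSq B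
        - 2 * ((∑ k, ∑ l, S (i, k) (j, l) * star (B k l)) * star (A i j)).re := by
      rw [Finset.sum_mul, Complex.re_sum, frobSq]
      simp_rw [Finset.sum_mul, Complex.re_sum, Finset.mul_sum]
      rw [← Finset.sum_add_distrib, ← Finset.sum_sub_distrib]
      refine Finset.sum_congr rfl fun k _ => ?_
      rw [← Finset.sum_add_distrib, ← Finset.sum_sub_distrib]
      refine Finset.sum_congr rfl fun l _ => ?_
      simp [Complex.normSq_apply]
      ring
    rw [e1, ← hR]
    simp [Complex.normSq_apply]
    ring
  have ex : ∀ M : Matrix (Fin p × Fin q) (Fin p × Fin q) ℂ, frobSq M =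
      ∑ i, ∑ j, ∑ k, ∑ l, Complex.normSq (M (i, k) (j, l)) := by
    intro M
    simp only [frobSq, Fintype.sum_prod_type]
    exact Finset.sum_congr rfl fun i _ => Finset.sum_comm
  rw [ex, ex]
  simp only [Matrix.sub_apply, Matrix.kroneckerMap_apply]
  simp_rw [key]
  simp only [frobSq, Finset.sum_add_distrib, Finset.sum_sub_distrib, ← Finset.mul_sum,
    Matrix.sub_apply]

lemma frobSq_eq_sum_basis {p : ℕ} (M : Matrix (Fin p) (Fin p) ℂ)
    (b : OrthonormalBasis (Fin p) ℂ (EuclideanSpace ℂ (Fin p))) :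
    frobSq M = ∑ j, ‖Matrix.toEuclideanLin M (b j)‖ ^ 2 := by
  simp_rw [EuclideanSpace.norm_sq_eq]
  rw [Finset.sum_comm, frobSq]
  refine Finset.sum_congr rfl fun i _ => ?_
  have h := b.sum_sq_norm_inner_right (WithLp.toLp 2 (fun l => star (M i l)))
  have h' := b.sum_sq_norm_inner_left (WithLp.toLp 2 (fun l => star (M i l)))
  rw [EuclideanSpace.norm_sq_eq] at h h'
  simp only [Complex.normSq_eq_norm_sq]
  simp only [norm_star] at h h'
  rw [← h']
  refine Finset.sum_congr rfl fun j _ => ?_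
  congr 2
  simp [EuclideanSpace.inner_eq_star_dotProduct, Matrix.mulVec, dotProduct, mul_comm]

theorem eig_truncation_RA_minimizes {p q : ℕ}
    (S : Matrix (Fin p × Fin q) (Fin p × Fin q) ℂ) (hS : S.PosSemidef)
    (B : Matrix (Fin q) (Fin q) ℂ) (hB : B.PosSemidef) (hB0 : B ≠ 0)
    (ra : ℕ) (hra1 : 1 ≤ ra) (hrap : ra ≤ p)
    (RA : Matrix (Fin p) (Fin p) ℂ)
    (hRA : RA = Matrix.of fun i j => (Bᴴ * blk S i j).trace / (frobSq B : ℂ))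
    (hRApsd : RA.PosSemidef)
    (lam : Fin p → ℝ) (u : Fin p → Fin p → ℂ)
    (hanti : Antitone lam) (hnonneg : ∀ i, 0 ≤ lam i)
    (horth : ∀ i j, star (u i) ⬝ᵥ u j = if i = j then 1 else 0)
    (hdec : RA = ∑ i, (lam i : ℂ) • Matrix.vecMulVec (u i) (star (u i)))
    (Ahat : Matrix (Fin p) (Fin p) ℂ)
    (hAhat : Ahat = ∑ i ∈ Finset.univ.filter (fun i : Fin p => (i : ℕ) < ra),
      (lam i : ℂ) • Matrix.vecMulVec (u i) (star (u i))) :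
    ∀ A : Matrix (Fin p) (Fin p) ℂ, A.rank ≤ ra →
      Real.sqrt (frobSq (S - Ahat ⊗ₖ B)) ≤ Real.sqrt (frobSq (S - A ⊗ₖ B)) := by
  intro A hA
  apply Real.sqrt_le_sqrt
  have hBnn : 0 ≤ frobSq B :=
    Finset.sum_nonneg fun i _ => Finset.sum_nonneg fun j _ => Complex.normSq_nonneg _
  have hBne : frobSq B ≠ 0 := by
    intro h
    apply hB0
    ext i j
    have h1 := (Finset.sum_eq_zero_iff_of_nonneg (fun i _ =>
      Finset.sum_nonneg fun j _ => Complex.normSq_nonneg (B i j))).1 h i (Finset.mem_univ _)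
    have h2 := (Finset.sum_eq_zero_iff_of_nonneg (fun j _ =>
      Complex.normSq_nonneg (B i j))).1 h1 j (Finset.mem_univ _)
    simpa using h2
  rw [frobSq_kron_expand S B hBne RA hRA, frobSq_kron_expand S B hBne RA hRA]
  have hon : Orthonormal ℂ (fun i => (WithLp.toLp 2 (u i) : EuclideanSpace ℂ (Fin p))) := by
    rw [orthonormal_iff_ite]
    intro i j
    rw [← horth i j, EuclideanSpace.inner_eq_star_dotProduct, dotProduct_comm]
  haveI : Nonempty (Fin p) := ⟨⟨0, by omega⟩⟩
  let b : OrthonormalBasis (Fin p) ℂ (EuclideanSpace ℂ (Fin p)) :=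
    (basisOfOrthonormalOfCardEqFinrank hon (by simp)).toOrthonormalBasis (by simpa using hon)
  have hbu : ∀ j, b j = WithLp.toLp 2 (u j) := by intro j; simp [b]
  have hmul : ∀ (s : Finset (Fin p)) (j : Fin p),
      (∑ i ∈ s, (lam i : ℂ) • Matrix.vecMulVec (u i) (star (u i))) *ᵥ u j =
        if j ∈ s then (lam j : ℂ) • u j else 0 := by
    intro s j
    rw [Matrix.sum_mulVec]
    simp_rw [Matrix.smul_mulVec, Matrix.vecMulVec_mulVec, horth]
    rw [← Finset.sum_ite_eq' s j (fun j => (lam j : ℂ) • u j)]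
    refine Finset.sum_congr rfl fun i _ => ?_
    split_ifs <;> simp
  have hRAu : ∀ j, Matrix.toEuclideanLin RA (b j) = (lam j : ℂ) • b j := by
    intro j
    have := hmul Finset.univ j
    rw [← hdec] at this
    rw [hbu, Matrix.toEuclideanLin_toLp, Matrix.toLin'_apply, this]
    simp
  have hAhu : ∀ j, Matrix.toEuclideanLin Ahat (b j) =
      if (j : ℕ) < ra then (lam j : ℂ) • b j else 0 := by
    intro j
    have := hmul (Finset.univ.filter (fun i : Fin p => (i : ℕ) < ra)) j
    rw [← hAhat] at this
    rw [hbu, Matrix.toEuclideanLin_toLp, Matrix.toLin'_apply, this]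
    split_ifs with h1 h2 h2 <;> simp_all
  have hmain : frobSq (RA - Ahat) ≤ frobSq (RA - A) := by
    rw [frobSq_eq_sum_basis _ b, frobSq_eq_sum_basis _ b]
    simp only [map_sub, LinearMap.sub_apply, hRAu, hAhu]
    refine le_trans (le_of_eq ?_) (ey_abstract hra1 hrap lam hanti hnonneg b
      (LinearMap.range (Matrix.toEuclideanLin A)) ?_ (fun j => Matrix.toEuclideanLin A (b j))
      (fun j => ⟨_, rfl⟩))
    · refine Finset.sum_congr rfl fun j _ => ?_
      have : ‖b j‖ = 1 := b.orthonormal.1 j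
      split_ifs <;> simp [norm_smul, this]
    · have h := Matrix.rank_eq_finrank_range_toLin A (PiLp.basisFun 2 ℂ (Fin p))
        (PiLp.basisFun 2 ℂ (Fin p))
      rw [← Matrix.toEuclideanLin_eq_toLin] at h
      rwa [← h]
  nlinarith [mul_le_mul_of_nonneg_left hmain hBnn]
end

section
/- One iteration of the LR-Kron alternating minimization algorithm does not increase the objective: let S ∈ ℂ^{pq×pq} be Hermitian positive semidefinite, let A_k ∈ ℂ^{p×p} be Hermitian positive semidefinite with A_k ≠ 0 and rank(A_k) ≤ r_a, and let B_k ∈ ℂ^{q×q} with rank(B_k) ≤ r_b, where 1 ≤ r_a ≤ p and 1 ≤ r_b ≤ q. Define B_{k+1} := EIG_{r_b}( (Σ_{i,j=1}^p conj((A_k)_{ij}) S(i,j)) / ‖A_k‖_F² ), assume B_{k+1} ≠ 0, and define A_{k+1} := EIG_{r_a}(R_A) where (R_A)_{ij} := tr(B_{k+1}^H S(i,j)) / ‖B_{k+1}‖_F². Then ‖S − A_{k+1}⊗B_{k+1}‖_F ≤ ‖S − A_k⊗B_{k+1}‖_F ≤ ‖S − A_k⊗B_k‖_F. -/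
open Matrix Kronecker BigOperators ComplexOrder

lemma lk_scalar {α : Type*} [Fintype α] (a s : α → ℂ) (N : ℝ)
    (hN : N = ∑ x, Complex.normSq (a x)) (r b : ℂ)
    (hr : (N : ℂ) * r = ∑ x, (starRingEnd ℂ) (a x) * s x) :
    ∑ x, Complex.normSq (s x - a x * b) =
      ∑ x, Complex.normSq (s x) + N * (Complex.normSq (r - b) - Complex.normSq r) := by
  have h1 : ∑ x, Complex.normSq (s x - a x * b) =
      ∑ x, Complex.normSq (s x) + (∑ x, Complex.normSq (a x)) * Complex.normSq b
        - 2 * ((∑ x, (starRingEnd ℂ) (a x) * s x) * (starRingEnd ℂ) b).re := by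
    rw [Finset.sum_mul, Finset.sum_mul, Complex.re_sum, Finset.mul_sum, ← Finset.sum_add_distrib,
      ← Finset.sum_sub_distrib]
    refine Finset.sum_congr rfl fun x _ => ?_
    simp [Complex.normSq_apply]
    ring
  rw [h1, ← hr, ← hN]
  simp [Complex.normSq_apply]
  ring

lemma lk_weights {n : ℕ} (r : ℕ) (hr1 : 1 ≤ r) (hrn : r ≤ n) (l : Fin n → ℝ) (hl : Antitone l)
    (h0 : ∀ i, 0 ≤ l i) (t : Fin n → ℝ) (ht0 : ∀ i, 0 ≤ t i) (ht1 : ∀ i, t i ≤ 1)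
    (hts : ∑ i, t i ≤ r) :
    ∑ i : Fin n, (if (i : ℕ) < r then 0 else l i ^ 2) ≤ ∑ i, l i ^ 2 * (1 - t i) := by
  set c := l ⟨r - 1, by omega⟩ ^ 2 with hc
  have hc0 : 0 ≤ c := sq_nonneg _
  have hcard : ∑ i : Fin n, (if (i : ℕ) < r then (1 : ℝ) else 0) = r := by
    rw [Finset.sum_boole]
    have : (Finset.univ.filter (fun i : Fin n => (i : ℕ) < r)).card = r := by
      rw [Fin.card_filter_val_lt]; omega
    rw [this]
  have key : ∀ i : Fin n, (if (i : ℕ) < r then 0 else l i ^ 2) + c * (if (i : ℕ) < r then (1 : ℝ) else 0)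
      ≤ l i ^ 2 * (1 - t i) + c * t i := by
    intro i
    split_ifs with h
    · have : l ⟨r - 1, by omega⟩ ≤ l i := hl (by rw [Fin.le_def]; simp; omega)
      have : c ≤ l i ^ 2 := by
        have := h0 ⟨r - 1, by omega⟩
        rw [hc]; gcongr
      nlinarith [ht1 i]
    · have : l i ≤ l ⟨r - 1, by omega⟩ := hl (by rw [Fin.le_def]; simp; omega)
      have : l i ^ 2 ≤ c := by
        have := h0 i
        rw [hc]; gcongr
      nlinarith [ht0 i]
  have := Finset.sum_le_sum (s := Finset.univ) fun i _ => key i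
  rw [Finset.sum_add_distrib, Finset.sum_add_distrib, ← Finset.mul_sum, ← Finset.mul_sum, hcard] at this
  nlinarith

lemma lk_parseval {n : ℕ} (b : OrthonormalBasis (Fin n) ℂ (EuclideanSpace ℂ (Fin n)))
    (M : Matrix (Fin n) (Fin n) ℂ) :
    frobSq M = ∑ j, ‖(WithLp.toLp 2 (M *ᵥ (b j).ofLp) : EuclideanSpace ℂ (Fin n))‖ ^ 2 := by
  simp_rw [EuclideanSpace.norm_sq_eq]
  rw [Finset.sum_comm]
  unfold frobSq
  refine Finset.sum_congr rfl fun i _ => ?_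
  have h := b.sum_sq_norm_inner_left (WithLp.toLp 2 (star (M i)) : EuclideanSpace ℂ (Fin n))
  rw [EuclideanSpace.norm_sq_eq] at h
  have h2 : ∑ j, Complex.normSq (M i j) = ∑ j, ‖(star (M i)) j‖ ^ 2 := by
    simp [Complex.normSq_eq_norm_sq]
  rw [h2]
  refine h.symm.trans ?_
  refine Finset.sum_congr rfl fun j _ => ?_
  congr 1
  rw [← norm_inner_symm]
  have h3 : inner ℂ (b j) (WithLp.toLp 2 (star (M i)) : EuclideanSpace ℂ (Fin n))
      = star ((M *ᵥ (b j).ofLp) i) := by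
    simp [EuclideanSpace.inner_eq_star_dotProduct, Matrix.mulVec, dotProduct]
  rw [h3, norm_star]

lemma lk_proj_sum {n : ℕ} (b : OrthonormalBasis (Fin n) ℂ (EuclideanSpace ℂ (Fin n)))
    (W : Submodule ℂ (EuclideanSpace ℂ (Fin n))) :
    ∑ j, ‖W.orthogonalProjection (b j)‖ ^ 2 = Module.finrank ℂ W := by
  set w := stdOrthonormalBasis ℂ W
  have h1 : ∀ j, ‖W.orthogonalProjection (b j)‖ ^ 2
      = ∑ k, ‖inner ℂ ((w k : W) : EuclideanSpace ℂ (Fin n)) (b j)‖ ^ 2 := by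
    intro j
    rw [← w.sum_sq_norm_inner_right]
    refine Finset.sum_congr rfl fun k _ => ?_
    rw [Submodule.inner_orthogonalProjection_eq_of_mem_left]
  simp_rw [h1]
  rw [Finset.sum_comm]
  simp_rw [b.sum_sq_norm_inner_left]
  have : ∀ k, ‖((w k : W) : EuclideanSpace ℂ (Fin n))‖ = 1 := fun k => w.norm_eq_one k
  simp [this]

lemma lk_eckart_young {n : ℕ} (r : ℕ) (hr1 : 1 ≤ r) (hrn : r ≤ n)
    (R X Rr : Matrix (Fin n) (Fin n) ℂ) (hX : X.rank ≤ r)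
    (lam : Fin n → ℝ) (u : Fin n → Fin n → ℂ)
    (hanti : Antitone lam) (hnonneg : ∀ i, 0 ≤ lam i)
    (horth : ∀ i j, star (u i) ⬝ᵥ u j = if i = j then 1 else 0)
    (hdec : R = ∑ i, (lam i : ℂ) • Matrix.vecMulVec (u i) (star (u i)))
    (hRr : Rr = ∑ i ∈ Finset.univ.filter (fun i : Fin n => (i : ℕ) < r),
      (lam i : ℂ) • Matrix.vecMulVec (u i) (star (u i))) :
    frobSq (R - Rr) ≤ frobSq (R - X) := by
  have hon : Orthonormal ℂ (fun i => (WithLp.toLp 2 (u i) : EuclideanSpace ℂ (Fin n))) := by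
    rw [orthonormal_iff_ite]
    intro i j
    rw [← horth i j]
    simp [EuclideanSpace.inner_eq_star_dotProduct, dotProduct_comm]
  let b : OrthonormalBasis (Fin n) ℂ (EuclideanSpace ℂ (Fin n)) :=
    OrthonormalBasis.mk hon (by
      rw [LinearIndependent.span_eq_top_of_card_eq_finrank' hon.linearIndependent (by simp)])
  have hb : ∀ j, b j = WithLp.toLp 2 (u j) := fun j => by simp [b]
  have hdiag : ∀ (s : Finset (Fin n)) (j : Fin n),
      (∑ i ∈ s, (lam i : ℂ) • Matrix.vecMulVec (u i) (star (u i))) *ᵥ u j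
        = if j ∈ s then (lam j : ℂ) • u j else 0 := by
    intro s j
    rw [Matrix.sum_mulVec]
    simp_rw [Matrix.smul_mulVec, Matrix.vecMulVec_mulVec, horth]
    rw [← Finset.sum_ite_eq' s j (fun j => (lam j : ℂ) • u j)]
    refine Finset.sum_congr rfl fun i _ => ?_
    split_ifs <;> simp
  have hnorm : ∀ j, ‖(WithLp.toLp 2 (u j) : EuclideanSpace ℂ (Fin n))‖ = 1 := hon.1
  have hL : frobSq (R - Rr) = ∑ j : Fin n, (if (j : ℕ) < r then 0 else lam j ^ 2) := by
    rw [lk_parseval b]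
    refine Finset.sum_congr rfl fun j _ => ?_
    rw [hb, Matrix.sub_mulVec, hdec, hRr, hdiag, hdiag]
    by_cases h : (j : ℕ) < r
    · simp [h]
    · simp [h, norm_smul, hnorm]
  let W : Submodule ℂ (EuclideanSpace ℂ (Fin n)) :=
    (LinearMap.range X.mulVecLin).map (WithLp.linearEquiv 2 ℂ (Fin n → ℂ)).symm.toLinearMap
  have hW : Module.finrank ℂ W = X.rank := by
    exact LinearEquiv.finrank_map_eq _ _
  rw [hL]
  refine (lk_weights r hr1 hrn lam hanti hnonneg (fun j => ‖W.orthogonalProjection (b j)‖ ^ 2)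
    (fun _ => by positivity) (fun j => ?_) ?_).trans ?_
  · have h1 := W.norm_orthogonalProjection_apply_le (b j)
    rw [b.norm_eq_one] at h1
    exact pow_le_one₀ (norm_nonneg _) h1
  · rw [lk_proj_sum, hW]; exact_mod_cast hX
  · rw [lk_parseval b]
    refine Finset.sum_le_sum fun j _ => ?_
    set x : EuclideanSpace ℂ (Fin n) := WithLp.toLp 2 (X *ᵥ (b j).ofLp) with hx
    have hxW : x ∈ W := Submodule.mem_map_of_mem (f := (WithLp.linearEquiv 2 ℂ (Fin n → ℂ)).symm.toLinearMap) ⟨(b j).ofLp, rfl⟩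
    have e1 : (WithLp.toLp 2 ((R - X) *ᵥ (b j).ofLp) : EuclideanSpace ℂ (Fin n))
        = (lam j : ℂ) • b j - x := by
      rw [hx, Matrix.sub_mulVec, hb, hdec, hdiag]
      simp
    rw [e1]
    set y := (lam j : ℂ) • b j - x
    have e2 := W.norm_sq_eq_add_norm_sq_projection y
    have e3 := W.norm_sq_eq_add_norm_sq_projection (b j)
    rw [b.norm_eq_one] at e3
    have e4 : Wᗮ.orthogonalProjection y = (lam j : ℂ) • Wᗮ.orthogonalProjection (b j) := by
      have : Wᗮ.orthogonalProjection x = 0 :=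
        Submodule.orthogonalProjection_mem_subspace_orthogonalComplement_eq_zero
          (W.le_orthogonal_orthogonal hxW)
      simp [y, this]
    rw [e2, e4, norm_smul, mul_pow]
    have : ‖(lam j : ℂ)‖ ^ 2 = lam j ^ 2 := by simp
    rw [this]
    have e5 : 1 - ‖W.orthogonalProjection (b j)‖ ^ 2 = ‖Wᗮ.orthogonalProjection (b j)‖ ^ 2 := by
      linarith
    simp only [e5]
    nlinarith [sq_nonneg ‖W.orthogonalProjection y‖]

lemma lk_kronB {p q : ℕ} (S : Matrix (Fin p × Fin q) (Fin p × Fin q) ℂ)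
    (A : Matrix (Fin p) (Fin p) ℂ) (B R : Matrix (Fin q) (Fin q) ℂ)
    (hR : ∀ k l, (frobSq A : ℂ) * R k l = ∑ i, ∑ j, (starRingEnd ℂ) (A i j) * S (i, k) (j, l)) :
    frobSq (S - A ⊗ₖ B) = frobSq S + frobSq A * (frobSq (R - B) - frobSq R) := by
  have e : ∀ M : Matrix (Fin p × Fin q) (Fin p × Fin q) ℂ,
      frobSq M = ∑ k, ∑ l, ∑ x : Fin p × Fin p, Complex.normSq (M (x.1, k) (x.2, l)) := by
    intro M
    unfold frobSq
    simp_rw [Fintype.sum_prod_type]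
    rw [Finset.sum_comm]
    refine Finset.sum_congr rfl fun k _ => ?_
    conv_rhs => rw [Finset.sum_comm]
    refine Finset.sum_congr rfl fun i _ => ?_
    rw [Finset.sum_comm]
  rw [e (S - _), e S]
  have h := fun k l => lk_scalar (fun x : Fin p × Fin p => A x.1 x.2)
    (fun x => S (x.1, k) (x.2, l)) (frobSq A)
    (by rw [Fintype.sum_prod_type]; rfl) (R k l) (B k l) (by rw [hR, Fintype.sum_prod_type])
  simp only [Matrix.sub_apply, Matrix.kroneckerMap_apply, h, Finset.sum_add_distrib,
    ← Finset.mul_sum, Finset.sum_sub_distrib]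
  simp [frobSq]

lemma lk_kronA {p q : ℕ} (S : Matrix (Fin p × Fin q) (Fin p × Fin q) ℂ)
    (A R : Matrix (Fin p) (Fin p) ℂ) (B : Matrix (Fin q) (Fin q) ℂ)
    (hR : ∀ i j, (frobSq B : ℂ) * R i j = ∑ k, ∑ l, (starRingEnd ℂ) (B k l) * S (i, k) (j, l)) :
    frobSq (S - A ⊗ₖ B) = frobSq S + frobSq B * (frobSq (R - A) - frobSq R) := by
  have sw : ∀ M : Matrix (Fin p × Fin q) (Fin p × Fin q) ℂ,
      frobSq M = frobSq (M.submatrix Prod.swap Prod.swap : Matrix (Fin q × Fin p) _ ℂ) := by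
    intro M
    unfold frobSq
    rw [← (Equiv.prodComm (Fin q) (Fin p)).sum_comp]
    refine Finset.sum_congr rfl fun x _ => ?_
    rw [← (Equiv.prodComm (Fin q) (Fin p)).sum_comp]
    rfl
  rw [sw (S - _), sw S, ← lk_kronB (S.submatrix Prod.swap Prod.swap) B A R (by simpa using hR)]
  congr 1
  ext x y
  simp [mul_comm]

lemma lk_frobSq_nonneg {m n : Type*} [Fintype m] [Fintype n] (M : Matrix m n ℂ) : 0 ≤ frobSq M :=
  Finset.sum_nonneg fun _ _ => Finset.sum_nonneg fun _ _ => Complex.normSq_nonneg _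

lemma lk_frobSq_ne {m n : Type*} [Fintype m] [Fintype n] (M : Matrix m n ℂ) (h : M ≠ 0) :
    (frobSq M : ℂ) ≠ 0 := by
  intro h0
  apply h
  have h1 : frobSq M = 0 := by exact_mod_cast h0
  unfold frobSq at h1
  ext i j
  have h2 := (Finset.sum_eq_zero_iff_of_nonneg
    (fun i _ => Finset.sum_nonneg fun j _ => Complex.normSq_nonneg (M i j))).1 h1 i
    (Finset.mem_univ _)
  exact Complex.normSq_eq_zero.1 ((Finset.sum_eq_zero_iff_of_nonneg
    (fun j _ => Complex.normSq_nonneg (M i j))).1 h2 j (Finset.mem_univ _))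

/-- One iteration of the LR-Kron alternating minimization does not increase the objective:
with B_{k+1} = EIG_{r_b}(R_B) computed from A_k and A_{k+1} = EIG_{r_a}(R_A) computed from
B_{k+1}, we have ‖S − A_{k+1}⊗B_{k+1}‖_F ≤ ‖S − A_k⊗B_{k+1}‖_F ≤ ‖S − A_k⊗B_k‖_F. -/
theorem lrkron_iteration_monotone {p q : ℕ}
    (S : Matrix (Fin p × Fin q) (Fin p × Fin q) ℂ) (hS : S.PosSemidef)
    (ra rb : ℕ) (hra1 : 1 ≤ ra) (hrap : ra ≤ p) (hrb1 : 1 ≤ rb) (hrbq : rb ≤ q)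
    (Ak : Matrix (Fin p) (Fin p) ℂ) (hAk : Ak.PosSemidef) (hAk0 : Ak ≠ 0)
    (hAkrank : Ak.rank ≤ ra)
    (Bk : Matrix (Fin q) (Fin q) ℂ) (hBkrank : Bk.rank ≤ rb)
    -- the B-update: B_{k+1} = EIG_{r_b}(R_B)
    (RB : Matrix (Fin q) (Fin q) ℂ)
    (hRB : RB = ((frobSq Ak : ℂ))⁻¹ • ∑ i, ∑ j, (starRingEnd ℂ) (Ak i j) • blk S i j)
    (lamB : Fin q → ℝ) (uB : Fin q → Fin q → ℂ)
    (hantiB : Antitone lamB) (hnonnegB : ∀ i, 0 ≤ lamB i)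
    (horthB : ∀ i j, star (uB i) ⬝ᵥ uB j = if i = j then 1 else 0)
    (hdecB : RB = ∑ i, (lamB i : ℂ) • Matrix.vecMulVec (uB i) (star (uB i)))
    (Bk1 : Matrix (Fin q) (Fin q) ℂ)
    (hBk1 : Bk1 = ∑ i ∈ Finset.univ.filter (fun i : Fin q => (i : ℕ) < rb),
      (lamB i : ℂ) • Matrix.vecMulVec (uB i) (star (uB i)))
    (hBk10 : Bk1 ≠ 0)
    -- the A-update: A_{k+1} = EIG_{r_a}(R_A)
    (RA : Matrix (Fin p) (Fin p) ℂ)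
    (hRA : RA = Matrix.of fun i j => (Bk1ᴴ * blk S i j).trace / (frobSq Bk1 : ℂ))
    (lamA : Fin p → ℝ) (uA : Fin p → Fin p → ℂ)
    (hantiA : Antitone lamA) (hnonnegA : ∀ i, 0 ≤ lamA i)
    (horthA : ∀ i j, star (uA i) ⬝ᵥ uA j = if i = j then 1 else 0)
    (hdecA : RA = ∑ i, (lamA i : ℂ) • Matrix.vecMulVec (uA i) (star (uA i)))
    (Ak1 : Matrix (Fin p) (Fin p) ℂ)
    (hAk1 : Ak1 = ∑ i ∈ Finset.univ.filter (fun i : Fin p => (i : ℕ) < ra),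
      (lamA i : ℂ) • Matrix.vecMulVec (uA i) (star (uA i))) :
    Real.sqrt (frobSq (S - Ak1 ⊗ₖ Bk1)) ≤ Real.sqrt (frobSq (S - Ak ⊗ₖ Bk1)) ∧
    Real.sqrt (frobSq (S - Ak ⊗ₖ Bk1)) ≤ Real.sqrt (frobSq (S - Ak ⊗ₖ Bk)) := by
  constructor
  · apply Real.sqrt_le_sqrt
    have hR : ∀ i j, (frobSq Bk1 : ℂ) * RA i j
        = ∑ k, ∑ l, (starRingEnd ℂ) (Bk1 k l) * S (i, k) (j, l) := by
      intro i j
      rw [hRA, Matrix.of_apply, mul_div_cancel₀ _ (lk_frobSq_ne _ hBk10), Finset.sum_comm]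
      simp [Matrix.trace, Matrix.mul_apply, blk]
    rw [lk_kronA S Ak1 RA Bk1 hR, lk_kronA S Ak RA Bk1 hR]
    have := lk_eckart_young ra hra1 hrap RA Ak Ak1 hAkrank lamA uA hantiA hnonnegA horthA hdecA hAk1
    have := lk_frobSq_nonneg Bk1
    gcongr
  · apply Real.sqrt_le_sqrt
    have hR : ∀ k l, (frobSq Ak : ℂ) * RB k l
        = ∑ i, ∑ j, (starRingEnd ℂ) (Ak i j) * S (i, k) (j, l) := by
      intro k l
      rw [hRB, Matrix.smul_apply, smul_eq_mul, mul_inv_cancel_left₀ (lk_frobSq_ne _ hAk0)]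
      simp [Matrix.sum_apply, blk]
    rw [lk_kronB S Ak Bk1 RB hR, lk_kronB S Ak Bk RB hR]
    have := lk_eckart_young rb hrb1 hrbq RB Bk Bk1 hBkrank lamB uB hantiB hnonnegB horthB hdecB hBk1
    have := lk_frobSq_nonneg Ak
    gcongr
end

section
/- A matrix M ∈ ℂ^{pq×pq} is a Kronecker product if and only if its rearrangement has rank at most one: rank(R(M)) ≤ 1 if and only if there exist A ∈ ℂ^{p×p} and B ∈ ℂ^{q×q} such that M = A⊗B. -/
open Matrix Kronecker BigOperators

/-- The Pitsianis–Van Loan rearrangement operator: the ((i,j))-th row of R(M) is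
vec(M(i,j))ᵀ, where M(i,j) is the (i,j)-th q×q block of M. -/
def rearrange {p q : ℕ} (M : Matrix (Fin p × Fin q) (Fin p × Fin q) ℂ) :
    Matrix (Fin p × Fin p) (Fin q × Fin q) ℂ :=
  Matrix.of fun ij kl => M (ij.1, kl.2) (ij.2, kl.1)

/-- A matrix is a Kronecker product if and only if its rearrangement has rank at most one. -/
theorem rank_rearrange_le_one_iff_kronecker {p q : ℕ}
    (M : Matrix (Fin p × Fin q) (Fin p × Fin q) ℂ) :
    (rearrange M).rank ≤ 1 ↔
      ∃ (A : Matrix (Fin p) (Fin p) ℂ) (B : Matrix (Fin q) (Fin q) ℂ), M = A ⊗ₖ B := by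
  constructor
  · intro h
    obtain ⟨v, hv⟩ := finrank_le_one_iff.mp h
    have key : ∀ kl : Fin q × Fin q, ∃ c : ℂ, ∀ ij, rearrange M ij kl = c * v.1 ij := by
      intro kl
      obtain ⟨c, hc⟩ := hv ⟨(rearrange M).mulVecLin (Pi.single kl 1), LinearMap.mem_range_self _ _⟩
      refine ⟨c, fun ij => ?_⟩
      have h1 := congrFun (congrArg Subtype.val hc) ij
      simp at h1
      exact h1.symm
    choose c hc using key
    refine ⟨Matrix.of fun i j => v.1 (i, j), Matrix.of fun k l => c (l, k), ?_⟩
    ext ⟨i, k⟩ ⟨j, l⟩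
    have := hc (l, k) (i, j)
    simp only [rearrange, Matrix.of_apply] at this
    simp [Matrix.kroneckerMap_apply, this, mul_comm]
  · rintro ⟨A, B, rfl⟩
    have : rearrange (A ⊗ₖ B) =
        Matrix.vecMulVec (fun ij => A ij.1 ij.2) (fun kl => B kl.2 kl.1) := by
      ext ij kl
      simp [rearrange, Matrix.vecMulVec_apply]
    rw [this]
    exact Matrix.rank_vecMulVec_le _ _
end

section
/- The minimum of the unconstrained Kronecker approximation problem is determined by the largest singular value of the rearranged matrix: for every S ∈ ℂ^{pq×pq}, letting σ₁² denote the largest eigenvalue of R(S)^H R(S), one has ‖S − A⊗B‖_F² ≥ ‖S‖_F² − σ₁² for all A ∈ ℂ^{p×p} and B ∈ ℂ^{q×q}, and there exist Â ∈ ℂ^{p×p} and B̂ ∈ ℂ^{q×q} attaining ‖S − Â⊗B̂‖_F² = ‖S‖_F² − σ₁². -/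
open Matrix Kronecker BigOperators

lemma star_dot_self_eq {n : Type*} [Fintype n] (v : n → ℂ) :
    star v ⬝ᵥ v = ((∑ j, Complex.normSq (v j) : ℝ) : ℂ) := by
  simp only [dotProduct, Pi.star_apply, Complex.ofReal_sum]
  exact Finset.sum_congr rfl fun j _ => (Complex.normSq_eq_conj_mul_self).symm

lemma star_dot_gram {m n : Type*} [Fintype m] [Fintype n] (N : Matrix m n ℂ) (v : n → ℂ) :
    star v ⬝ᵥ ((Nᴴ * N) *ᵥ v) = ((∑ i, Complex.normSq ((N *ᵥ v) i) : ℝ) : ℂ) := by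
  rw [← star_dot_self_eq, star_mulVec, ← dotProduct_mulVec, mulVec_mulVec]

open scoped ComplexOrder in
lemma gram_eigenvalues_nonneg {m n : Type*} [Fintype m] [Fintype n] [DecidableEq n]
    (N : Matrix m n ℂ) (hH : (Nᴴ * N).IsHermitian) (i : n) : 0 ≤ hH.eigenvalues i :=
  (posSemidef_conjTranspose_mul_self N).eigenvalues_nonneg i

open scoped ComplexOrder in
lemma normSq_mulVec_le {m n : Type*} [Fintype m] [Fintype n] [DecidableEq n]
    (N : Matrix m n ℂ) (hH : (Nᴴ * N).IsHermitian) (s : ℝ)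
    (hub : ∀ i, hH.eigenvalues i ≤ s) (v : n → ℂ) :
    ∑ i, Complex.normSq ((N *ᵥ v) i) ≤ s * ∑ j, Complex.normSq (v j) := by
  have hpsd : ((s : ℂ) • (1 : Matrix n n ℂ) - Nᴴ * N).PosSemidef := by
    have hU : (hH.eigenvectorUnitary : Matrix n n ℂ) * (hH.eigenvectorUnitary : Matrix n n ℂ)ᴴ = 1 :=
      Unitary.coe_mul_star_self _
    have hd : (diagonal (fun i => ((s - hH.eigenvalues i : ℝ) : ℂ))).PosSemidef := by
      rw [posSemidef_diagonal_iff]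
      intro i
      exact_mod_cast sub_nonneg.2 (hub i)
    have h2 := hd.mul_mul_conjTranspose_same (hH.eigenvectorUnitary : Matrix n n ℂ)
    have h3 : (diagonal (fun i => ((s - hH.eigenvalues i : ℝ) : ℂ)))
        = (s : ℂ) • (1 : Matrix n n ℂ) - diagonal (RCLike.ofReal ∘ hH.eigenvalues) := by
      ext i j
      by_cases h : i = j
      · subst h; simp
      · simp [h]
    have h4 := hH.spectral_theorem
    rw [Unitary.conjStarAlgAut_apply] at h4
    rw [h3, mul_sub, sub_mul, mul_smul_comm, mul_one, smul_mul_assoc, hU] at h2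
    rw [star_eq_conjTranspose] at h4
    rw [← h4] at h2
    exact h2
  have h := hpsd.re_dotProduct_nonneg v
  rw [sub_mulVec, dotProduct_sub, star_dot_gram, smul_mulVec, one_mulVec, dotProduct_smul,
    star_dot_self_eq, smul_eq_mul, ← Complex.ofReal_mul, ← Complex.ofReal_sub] at h
  have h' : 0 ≤ s * ∑ j, Complex.normSq (v j) - ∑ i, Complex.normSq ((N *ᵥ v) i) := h
  linarith

lemma frobSq_sub_rankOne {m n : Type*} [Fintype m] [Fintype n] (N : Matrix m n ℂ)
    (a : m → ℂ) (v : n → ℂ) :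
    ∑ i, ∑ j, Complex.normSq (N i j - a i * star (v j)) =
      frobSq N - ∑ i, 2 * (star (a i) * (N *ᵥ v) i).re
        + (∑ i, Complex.normSq (a i)) * ∑ j, Complex.normSq (v j) := by
  unfold frobSq
  rw [Finset.sum_mul, ← Finset.sum_sub_distrib, ← Finset.sum_add_distrib]
  refine Finset.sum_congr rfl fun i _ => ?_
  rw [mulVec, dotProduct, Finset.mul_sum, Complex.re_sum, Finset.mul_sum, Finset.mul_sum,
    ← Finset.sum_sub_distrib, ← Finset.sum_add_distrib]
  refine Finset.sum_congr rfl fun j _ => ?_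
  simp [Complex.normSq_apply]
  ring

lemma frobSq_kron {p q : ℕ} (S : Matrix (Fin p × Fin q) (Fin p × Fin q) ℂ)
    (A : Matrix (Fin p) (Fin p) ℂ) (B : Matrix (Fin q) (Fin q) ℂ) :
    frobSq (S - A ⊗ₖ B) = ∑ i : Fin p × Fin p, ∑ j : Fin q × Fin q,
      Complex.normSq (rearrange S i j - A i.1 i.2 * B j.2 j.1) := by
  simp only [frobSq, rearrange, Fintype.sum_prod_type, Matrix.sub_apply, kroneckerMap_apply, of_apply]
  refine Finset.sum_congr rfl fun i _ => ?_
  rw [Finset.sum_comm]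
  refine Finset.sum_congr rfl fun j _ => ?_
  rw [Finset.sum_comm]

lemma frobSq_rearrange {p q : ℕ} (S : Matrix (Fin p × Fin q) (Fin p × Fin q) ℂ) :
    frobSq (rearrange S) = frobSq S := by
  have h := frobSq_kron S 0 0
  simp at h
  rw [h]; rfl

/-- The minimum of the unconstrained Kronecker approximation problem is ‖S‖_F² − σ₁²,
where σ₁² is the largest eigenvalue of R(S)ᴴR(S) (the squared largest singular value of
the rearranged matrix R(S)): the bound holds for all A, B and is attained. -/
theorem kronecker_approx_min_eq_frobSq_sub_sigma1sq {p q : ℕ}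
    (S : Matrix (Fin p × Fin q) (Fin p × Fin q) ℂ) (s1sq : ℝ)
    (hH : ((rearrange S)ᴴ * rearrange S).IsHermitian)
    (hub : ∀ i, hH.eigenvalues i ≤ s1sq)
    (hattained : ∃ i, hH.eigenvalues i = s1sq) :
    (∀ (A : Matrix (Fin p) (Fin p) ℂ) (B : Matrix (Fin q) (Fin q) ℂ),
      frobSq S - s1sq ≤ frobSq (S - A ⊗ₖ B)) ∧
    (∃ (Ahat : Matrix (Fin p) (Fin p) ℂ) (Bhat : Matrix (Fin q) (Fin q) ℂ),
      frobSq (S - Ahat ⊗ₖ Bhat) = frobSq S - s1sq) := by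
  have hs : 0 ≤ s1sq := by
    obtain ⟨i, hi⟩ := hattained
    rw [← hi]
    exact gram_eigenvalues_nonneg _ hH i
  constructor
  · intro A B
    set v : Fin q × Fin q → ℂ := fun j => star (B j.2 j.1) with hv
    set a : Fin p × Fin p → ℂ := fun i => A i.1 i.2 with ha
    have h1 := frobSq_sub_rankOne (rearrange S) a v
    have h2 := frobSq_kron S A B
    have h3 : ∀ (i : Fin p × Fin p) (j : Fin q × Fin q),
        A i.1 i.2 * B j.2 j.1 = a i * star (v j) := by
      intro i j
      simp [hv, ha]
    simp only [h3] at h2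
    rw [h1] at h2
    have hb := normSq_mulVec_le (rearrange S) hH s1sq hub v
    rw [h2, frobSq_rearrange]
    set w := rearrange S *ᵥ v with hw
    set t := ∑ j, Complex.normSq (v j) with ht
    have ht0 : 0 ≤ t := Finset.sum_nonneg fun j _ => Complex.normSq_nonneg _
    rcases ht0.eq_or_lt with h0 | h0
    · rw [← h0, mul_zero] at hb
      have hw0 : ∀ i, w i = 0 := by
        intro i
        have := (Finset.sum_eq_zero_iff_of_nonneg
          (fun i _ => Complex.normSq_nonneg (w i))).1
          (le_antisymm hb (Finset.sum_nonneg fun i _ => Complex.normSq_nonneg _)) i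
          (Finset.mem_univ i)
        exact Complex.normSq_eq_zero.1 this
      simp only [hw0, ← h0]
      simp
      linarith
    · have key : ∀ i, 2 * (star (a i) * w i).re ≤
          Complex.normSq (a i) * t + Complex.normSq (w i) / t := by
        intro i
        rw [← sub_nonneg]
        have : Complex.normSq (a i) * t + Complex.normSq (w i) / t - 2 * (star (a i) * w i).re
            = Complex.normSq (t * a i - w i) / t := by
          field_simp
          simp [Complex.normSq_apply]
          ring
        rw [this]
        exact div_nonneg (Complex.normSq_nonneg _) ht0
      have hsum := Finset.sum_le_sum fun i (_ : i ∈ Finset.univ) => key i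
      rw [Finset.sum_add_distrib, ← Finset.sum_mul, ← Finset.sum_div] at hsum
      have h5 : (∑ i, Complex.normSq (w i)) / t ≤ s1sq := (div_le_iff₀ h0).2 hb
      linarith
  · obtain ⟨k, hk⟩ := hattained
    set v : Fin q × Fin q → ℂ := ⇑(hH.eigenvectorBasis k) with hv
    have hn : ∑ j, Complex.normSq (v j) = 1 := by
      have := hH.eigenvectorBasis.orthonormal.1 k
      have h2 := EuclideanSpace.norm_sq_eq (hH.eigenvectorBasis k)
      rw [this] at h2
      simp only [Complex.normSq_eq_norm_sq]
      rw [hv, ← h2]; norm_num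
    have hw : ∑ i, Complex.normSq ((rearrange S *ᵥ v) i) = s1sq := by
      have h := star_dot_gram (rearrange S) v
      rw [hv, hH.mulVec_eigenvectorBasis, hk, dotProduct_smul, ← hv, star_dot_self_eq, hn] at h
      simp only [Complex.ofReal_one, Complex.real_smul, mul_one] at h
      exact_mod_cast h.symm
    refine ⟨of fun i j => (rearrange S *ᵥ v) (i, j), of fun k l => star (v (l, k)), ?_⟩
    have h1 := frobSq_sub_rankOne (rearrange S) (rearrange S *ᵥ v) v
    rw [frobSq_kron]
    simp only [of_apply, Prod.mk.eta]
    rw [h1, frobSq_rearrange, hn, hw]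
    have h3 : ∑ i, 2 * (star ((rearrange S *ᵥ v) i) * (rearrange S *ᵥ v) i).re = 2 * s1sq := by
      rw [← hw, Finset.mul_sum]
      refine Finset.sum_congr rfl fun i _ => ?_
      simp [Complex.normSq_apply]
    rw [h3]; ring
end
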